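/- Consider a single unicast index coding problem with n users: message index set [n], user k demands W_k = {k} and knows K_k ⊆ [n] \ {k}. Let G be its side-information digraph: vertex set [n] with an arc from k to j if and only if j ∈ K_k. If S ⊆ [n] is such that the subgraph of G induced on S contains no directed cycle, then every valid index code of length ℓ for message length t satisfies ℓ ≥ |S|·t; consequently the optimal broadcast rate R* satisfies R* ≥ MAIS(G), the maximum size of a subset of [n] inducing an acyclic subgraph of G. -/

import Mathlib

open Finset

/-- Users (= message indices) of a single unicast ICP with `n` users: `[n]`. -/
abbrev Usr (n : ℕ) : Type := {k : ℕ // k ∈ Finset.Icc 1 n}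

/-- A valid index code of length `ℓ` for message length `t`. -/
def ValidCode {I U : Type} (W Kn : U → Set I) (t ℓ : ℕ) : Prop :=
  ∃ E : (I → Fin t → Bool) → Fin ℓ → Bool,
  ∃ D : ∀ u : U, (Fin ℓ → Bool) → (↥(Kn u) → Fin t → Bool) → (↥(W u) → Fin t → Bool),
    ∀ x : I → Fin t → Bool, ∀ u : U,
      D u (E x) (fun m => x m.1) = fun m => x m.1

/-- The optimal broadcast rate of an index coding problem. -/
noncomputable def optRate {I U : Type} (W Kn : U → Set I) : ℝ :=
  sInf {ρ : ℝ | ∃ t ℓ : ℕ, 1 ≤ t ∧ ValidCode W Kn t ℓ ∧ ρ = (ℓ : ℝ) / (t : ℝ)}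

/-- Want sets of a single unicast ICP with `n` users: user `k` demands message `k`. -/
def suicpW (n : ℕ) : Usr n → Set (Usr n) := fun u => {x | x.1 = u.1}

/-- Known sets of a single unicast ICP with `n` users, induced by `Kn : ℕ → Set ℕ`. -/
def suicpK (n : ℕ) (Kn : ℕ → Set ℕ) : Usr n → Set (Usr n) := fun u => {x | x.1 ∈ Kn u.1}

lemma suicp_diff_step {n : ℕ} {Kn : ℕ → Set ℕ} {t ℓ : ℕ}
    {E : (Usr n → Fin t → Bool) → Fin ℓ → Bool}
    {D : ∀ u : Usr n, (Fin ℓ → Bool) → (↥(suicpK n Kn u) → Fin t → Bool) →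
      (↥(suicpW n u) → Fin t → Bool)}
    (hD : ∀ x : Usr n → Fin t → Bool, ∀ u : Usr n,
      D u (E x) (fun m => x m.1) = fun m => x m.1)
    {x y : Usr n → Fin t → Bool} (hE : E x = E y) (k : Usr n) (hk : x k ≠ y k) :
    ∃ j : Usr n, j.1 ∈ Kn k.1 ∧ x j ≠ y j := by
  by_contra! hno
  apply hk
  have h1 := hD x k
  have h2 := hD y k
  have h3 : (fun m : ↥(suicpK n Kn k) => x m.1) = fun m => y m.1 := by
    funext m
    exact hno m.1 m.2
  rw [hE, h3, h2] at h1
  exact (congrFun h1 ⟨k, rfl⟩).symm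

lemma exists_cycle {n : ℕ} {Kn : ℕ → Set ℕ} (S : Finset ℕ) (P : Usr n → Prop)
    (hP : ∀ k, P k → k.1 ∈ S) (hstep : ∀ k, P k → ∃ j : Usr n, j.1 ∈ Kn k.1 ∧ P j)
    (a : Usr n) (ha : P a) :
    ∃ (m : ℕ) (f : ℕ → ℕ), 0 < m ∧ (∀ j ≤ m, f j ∈ S) ∧
        (∀ j < m, f (j + 1) ∈ Kn (f j)) ∧ f m = f 0 := by
  choose! g hg1 hg2 using hstep
  have hit : ∀ i, P (g^[i] a) := by
    intro i
    induction i with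
    | zero => exact ha
    | succ i ih => rw [Function.iterate_succ_apply']; exact hg2 _ ih
  obtain ⟨i, j, hij, he⟩ := Finite.exists_ne_map_eq_of_infinite (fun i => g^[i] a)
  wlog hlt : i < j generalizing i j
  · exact this j i hij.symm he.symm (by omega)
  refine ⟨j - i, fun r => (g^[i + r] a).1, by omega, fun r _ => hP _ (hit _), ?_, ?_⟩
  · intro r _
    have := hg1 _ (hit (i + r))
    rw [← Function.iterate_succ_apply' g] at this
    exact this
  · have : i + (j - i) = j := by omega
    simp only [this, Nat.add_zero]
    exact congrArg Subtype.val he.symm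

lemma suicp_uncoded (n : ℕ) (Kn : ℕ → Set ℕ) :
    ValidCode (suicpW n) (suicpK n Kn) 1 (Fintype.card (Usr n)) := by
  refine ⟨fun x i => x ((Fintype.equivFin (Usr n)).symm i) 0,
    fun u c _ m _ => c (Fintype.equivFin (Usr n) m.1), ?_⟩
  intro x u
  funext m r
  have : r = 0 := Subsingleton.elim _ _
  simp [this]

/-- Lemma 7 of the paper, maximum acyclic induced subgraph lower
bound: for a single unicast ICP with `n` users and any set `S ⊆ [n]` inducing an
acyclic subgraph of the side-information digraph (arc `k → j` iff `j ∈ K_k`),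
every valid index code of length `ℓ` for message length `t` has `ℓ ≥ |S|·t`;
consequently the optimal broadcast rate satisfies `R* ≥ |S|`. -/
theorem stmt19 (n : ℕ) (Kn : ℕ → Set ℕ)
    (hKn : ∀ k ∈ Finset.Icc 1 n, Kn k ⊆ {j | j ∈ Finset.Icc 1 n ∧ j ≠ k})
    (S : Finset ℕ) (hS : S ⊆ Finset.Icc 1 n)
    (hacyc : ¬ ∃ (m : ℕ) (f : ℕ → ℕ), 0 < m ∧ (∀ j ≤ m, f j ∈ S) ∧
        (∀ j < m, f (j + 1) ∈ Kn (f j)) ∧ f m = f 0) :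
    (∀ t ℓ : ℕ, 1 ≤ t → ValidCode (suicpW n) (suicpK n Kn) t ℓ → S.card * t ≤ ℓ) ∧
    (S.card : ℝ) ≤ optRate (suicpW n) (suicpK n Kn) := by
  have key : ∀ t ℓ : ℕ, 1 ≤ t → ValidCode (suicpW n) (suicpK n Kn) t ℓ → S.card * t ≤ ℓ := by
    rintro t ℓ - ⟨E, D, hD⟩
    let ext : (S → Fin t → Bool) → Usr n → Fin t → Bool :=
      fun z k => if h : k.1 ∈ S then z ⟨k.1, h⟩ else fun _ => false
    have hinj : Function.Injective (fun z => E (ext z)) := by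
      intro z w hzw
      by_contra hne
      obtain ⟨a, ha⟩ := Function.ne_iff.mp hne
      apply hacyc
      refine exists_cycle S (fun k : Usr n => ext z k ≠ ext w k) ?_
        (fun k hk => suicp_diff_step hD hzw k hk) ⟨a.1, hS a.2⟩ ?_
      · intro k hk
        by_contra hkS
        exact hk (by simp [ext, hkS])
      · simpa [ext] using ha
    have hc := Fintype.card_le_of_injective _ hinj
    simp only [Fintype.card_fun, Fintype.card_bool, Fintype.card_fin, Fintype.card_coe,
      ← pow_mul] at hc
    rw [mul_comm]
    exact (Nat.pow_le_pow_iff_right (by norm_num)).mp hc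
  refine ⟨key, le_csInf ⟨_, 1, _, le_rfl, suicp_uncoded n Kn, rfl⟩ ?_⟩
  rintro ρ ⟨t, ℓ, ht, hv, rfl⟩
  rw [le_div_iff₀ (by exact_mod_cast ht)]
  exact_mod_cast key t ℓ ht hv
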